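/- Let R be a skew-invertible Hecke symmetry with parameter q such that j_q ≠ 0 for 2 ≤ j ≤ m, let M be an N×N matrix with entries in a unital associative ℂ-algebra 𝒜 satisfying the Reflection Equation R M₁ R M₁ = M₁ R M₁ R, suppose the R-skew-symmetrizer admits a rank-one factorization A^(m) = |u⟩⟨v| with ⟨v|u⟩ = 1, and assume Tr(C^{⊗m} A^(m)) = q^{−m²}. Then the quantum determinant det_R M := q^{m²} · Tr(C^{⊗m} A^(m) M_{1̄} ⋯ M_{m̄}) is given by the USUAL trace: det_R M = ⟨v| M_{1̄} ⋯ M_{m̄} |u⟩ = Tr(A^(m) M_{1̄} ⋯ M_{m̄}). -/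

import Mathlib

open Matrix BigOperators

noncomputable section

/-- An `N² × N²` complex matrix, viewed as an operator on `ℂ^N ⊗ ℂ^N`. -/
abbrev RMat (N : ℕ) := Matrix (Fin N × Fin N) (Fin N × Fin N) ℂ

/-- A matrix on the `k`-th tensor power of `ℂ^N`, with entries in `A`. -/
abbrev TMat (N k : ℕ) (A : Type _) := Matrix (Fin k → Fin N) (Fin k → Fin N) A

/-- The `q`-number `j_q = (q^j - q^{-j})/(q - q^{-1})`. -/
def qNum (q : ℂ) (j : ℕ) : ℂ := (q ^ j - q⁻¹ ^ j) / (q - q⁻¹)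

/-- Embedding of an `N²×N²` matrix `R` into the `k`-th tensor power,
acting in the (0-based) tensor factors `i` and `i+1`.  The paper's `R_i`
(1-based) is `embR k R (i-1)`. -/
def embR {N : ℕ} (k : ℕ) (R : RMat N) (i : ℕ) : TMat N k ℂ := fun f g =>
  if h : i + 1 < k then
    if ∀ j : Fin k, j.val ≠ i → j.val ≠ i + 1 → f j = g j then
      R (f ⟨i, Nat.lt_of_succ_lt h⟩, f ⟨i + 1, h⟩) (g ⟨i, Nat.lt_of_succ_lt h⟩, g ⟨i + 1, h⟩)
    else 0
  else (1 : TMat N k ℂ) f g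

/-- `X ⊗ I^{⊗(k-1)}` : the first copy `X_{1̄}` of an `N×N` matrix over `A`. -/
def emb1 {N : ℕ} (k : ℕ) {A : Type _} [Ring A] (X : Matrix (Fin N) (Fin N) A) :
    TMat N k A := fun f g =>
  if h : 0 < k then
    if ∀ j : Fin k, j.val ≠ 0 → f j = g j then X (f ⟨0, h⟩) (g ⟨0, h⟩) else 0
  else (1 : TMat N k A) f g

/-- Lift a complex matrix to a matrix over the `ℂ`-algebra `A`. -/
def liftC {N k : ℕ} (A : Type _) [Ring A] [Algebra ℂ A] (X : TMat N k ℂ) : TMat N k A :=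
  X.map (algebraMap ℂ A)

/-- The copies `X_{1̄}, X_{2̄}, …` of `X` in the `k`-th tensor power:
`copyX k R Rinv X i` is the paper's `X_{\overline{i+1}}`, i.e.
`X_{1̄} = X ⊗ I^{⊗(k-1)}` and `X_{\overline{i+1}} = R_i X_{ī} R_i⁻¹`. -/
def copyX {N : ℕ} (k : ℕ) (R Rinv : RMat N) {A : Type _} [Ring A] [Algebra ℂ A]
    (X : Matrix (Fin N) (Fin N) A) : ℕ → TMat N k A
  | 0 => emb1 k X
  | i + 1 => liftC A (embR k R i) * copyX k R Rinv X i * liftC A (embR k Rinv i)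

/-- The `R`-skew-symmetrizers, on the ambient `k`-th tensor power:
`Asym k R q j` is `A^{(j)}` (acting in the first `j` factors). -/
def Asym {N : ℕ} (k : ℕ) (R : RMat N) (q : ℂ) : ℕ → TMat N k ℂ
  | 0 => 1
  | 1 => 1
  | j + 2 =>
      (qNum q (j + 2))⁻¹ •
        (Asym k R q (j + 1) *
          ((q ^ (j + 1)) • (1 : TMat N k ℂ) - (qNum q (j + 1)) • embR k R j) *
          Asym k R q (j + 1))

/-- The `R`-symmetrizers, on the ambient `k`-th tensor power:
`Ssym k R q j` is `S^{(j)}` (acting in the first `j` factors). -/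
def Ssym {N : ℕ} (k : ℕ) (R : RMat N) (q : ℂ) : ℕ → TMat N k ℂ
  | 0 => 1
  | 1 => 1
  | j + 2 =>
      (qNum q (j + 2))⁻¹ •
        (Ssym k R q (j + 1) *
          ((q⁻¹ ^ (j + 1)) • (1 : TMat N k ℂ) + (qNum q (j + 1)) • embR k R j) *
          Ssym k R q (j + 1))

/-- The braid relation `R₁₂ R₂₃ R₁₂ = R₂₃ R₁₂ R₂₃` on `(ℂ^N)^{⊗3}`. -/
def IsBraiding {N : ℕ} (R : RMat N) : Prop :=
  embR 3 R 0 * embR 3 R 1 * embR 3 R 0 = embR 3 R 1 * embR 3 R 0 * embR 3 R 1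

/-- The Hecke condition `(q·I − R)(q⁻¹·I + R) = 0`. -/
def HeckeCond {N : ℕ} (R : RMat N) (q : ℂ) : Prop :=
  (q • (1 : RMat N) - R) * (q⁻¹ • (1 : RMat N) + R) = 0

/-- The Reflection Equation `R M₁ R M₁ = M₁ R M₁ R` (on `(ℂ^N)^{⊗2}`,
with entries in `A`). -/
def RERel {N : ℕ} (R : RMat N) {A : Type _} [Ring A] [Algebra ℂ A]
    (M : Matrix (Fin N) (Fin N) A) : Prop :=
  liftC A (embR 2 R 0) * emb1 2 M * liftC A (embR 2 R 0) * emb1 2 M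
    = emb1 2 M * liftC A (embR 2 R 0) * emb1 2 M * liftC A (embR 2 R 0)

/-- The relation `R⁻¹ D₁ R⁻¹ D₁ = D₁ R⁻¹ D₁ R⁻¹` on the matrix `D`,
where `Rinv = R⁻¹`. -/
def DDRel {N : ℕ} (Rinv : RMat N) {A : Type _} [Ring A] [Algebra ℂ A]
    (D : Matrix (Fin N) (Fin N) A) : Prop :=
  liftC A (embR 2 Rinv 0) * emb1 2 D * liftC A (embR 2 Rinv 0) * emb1 2 D
    = emb1 2 D * liftC A (embR 2 Rinv 0) * emb1 2 D * liftC A (embR 2 Rinv 0)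

/-- The permutation relations `D₁ R M₁ = R M₁ R⁻¹ D₁ R⁻¹ + I`, where `Rinv = R⁻¹`. -/
def PermRel {N : ℕ} (R Rinv : RMat N) {A : Type _} [Ring A] [Algebra ℂ A]
    (M D : Matrix (Fin N) (Fin N) A) : Prop :=
  emb1 2 D * liftC A (embR 2 R 0) * emb1 2 M
    = liftC A (embR 2 R 0) * emb1 2 M * liftC A (embR 2 Rinv 0) * emb1 2 D *
        liftC A (embR 2 Rinv 0) + 1

/-- `Ψ` is the skew-inverse of `R`:  `Σ_{j,b} R^{ij}_{ab} Ψ^{bc}_{jd} = δ^i_d δ^c_a`. -/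
def SkewInv {N : ℕ} (R Ψ : RMat N) : Prop :=
  ∀ i a c d : Fin N,
    (∑ j : Fin N, ∑ b : Fin N, R (i, j) (a, b) * Ψ (b, c) (j, d))
      = if i = d ∧ c = a then 1 else 0

/-- The matrix `C`, `C^c_d = Σ_i Ψ^{ic}_{id}`. -/
def Cmat {N : ℕ} (Ψ : RMat N) : Matrix (Fin N) (Fin N) ℂ :=
  fun c d => ∑ i : Fin N, Ψ (i, c) (i, d)

/-- The `R`-trace over all `k` tensor factors: `⟨X⟩_{1…k} = Tr(C^{⊗k} X)`. -/
def rTr {N k : ℕ} {A : Type _} [Ring A] [Algebra ℂ A] (C : Matrix (Fin N) (Fin N) ℂ)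
    (X : TMat N k A) : A :=
  ∑ f : Fin k → Fin N, ∑ g : Fin k → Fin N, (∏ j : Fin k, C (f j) (g j)) • X g f

/-- The chain `X_{1̄} X_{2̄} ⋯ X_{n̄}`. -/
def upChain {N : ℕ} (k : ℕ) (R Rinv : RMat N) {A : Type _} [Ring A] [Algebra ℂ A]
    (X : Matrix (Fin N) (Fin N) A) (n : ℕ) : TMat N k A :=
  ((List.range n).map (copyX k R Rinv X)).prod

/-- The reversed chain `X_{n̄} X_{\overline{n-1}} ⋯ X_{1̄}`. -/
def downChain {N : ℕ} (k : ℕ) (R Rinv : RMat N) {A : Type _} [Ring A] [Algebra ℂ A]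
    (X : Matrix (Fin N) (Fin N) A) (n : ℕ) : TMat N k A :=
  ((List.range n).reverse.map (copyX k R Rinv X)).prod

/-- The Capelli chain `L_{1̄}(L_{2̄} + q·1_q I)(L_{3̄} + q²·2_q I) ⋯ (L_{n̄} + q^{n-1}·(n-1)_q I)`
(note `0_q = 0`). -/
def capChainA {N : ℕ} (k : ℕ) (R Rinv : RMat N) (q : ℂ) {A : Type _} [Ring A] [Algebra ℂ A]
    (L : Matrix (Fin N) (Fin N) A) (n : ℕ) : TMat N k A :=
  ((List.range n).map
    (fun i => copyX k R Rinv L i + ((q ^ i) * qNum q i) • (1 : TMat N k A))).prod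

/-- The symmetric Capelli chain
`L_{1̄}(L_{2̄} - q⁻¹·1_q I) ⋯ (L_{n̄} - q^{-(n-1)}·(n-1)_q I)`. -/
def capChainS {N : ℕ} (k : ℕ) (R Rinv : RMat N) (q : ℂ) {A : Type _} [Ring A] [Algebra ℂ A]
    (L : Matrix (Fin N) (Fin N) A) (n : ℕ) : TMat N k A :=
  ((List.range n).map
    (fun i => copyX k R Rinv L i - ((q⁻¹ ^ i) * qNum q i) • (1 : TMat N k A))).prod

/-- The descending chain `R_{a→b} = R_a R_{a-1} ⋯ R_b` (1-based indices;
identity when `b > a`). -/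
def rChainDesc {N : ℕ} (k : ℕ) (R : RMat N) (a b : ℕ) : TMat N k ℂ :=
  ((List.range' b (a + 1 - b)).reverse.map (fun j => embR k R (j - 1))).prod

/-- The ascending chain `R_{b→a} = R_b R_{b+1} ⋯ R_a` (1-based indices;
identity when `b > a`). -/
def rChainAsc {N : ℕ} (k : ℕ) (R : RMat N) (b a : ℕ) : TMat N k ℂ :=
  ((List.range' b (a + 1 - b)).map (fun j => embR k R (j - 1))).prod

/-!
The braid group acts on operators by conjugation, `M_{\overline{i+1}}` being the image of `M_{ī}`
under `R_i`, and the Reflection Equation says that `R₁` fixes `M_{1̄} M_{2̄}`. The braid relation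
carries this to every `i`: `R_i` fixes `M_{ī} M_{\overline{i+1}}`, and it fixes all the other
copies, so it fixes `Z = M_{1̄} ⋯ M_{m̄}`. Thus the polynomial `A^(m)` in the `R_i` commutes with `Z`,
and since `A^(m) = |u⟩⟨v|` is idempotent, `A^(m) Z = A^(m) Z A^(m) = A^(m) ⟨v|Z|u⟩`. Applying
`Tr(C^{⊗m} ·)` or `Tr` to both sides gives the two formulas.
-/

section BraidAction

variable {G B : Type*} [Monoid G] [Monoid B] [MulDistribMulAction G B]

/-- The braided copies `x₀ = x`, `x_{i+1} = r_i • x_i` of an element `x`. With `r_i` acting as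
conjugation by the `i`-th copy of `R`, these are the `copyX`. -/
def braidCopy (r : ℕ → G) (x : B) : ℕ → B
  | 0 => x
  | i + 1 => r i • braidCopy r x i

/-- The braid relations on `k` strands, for the generators `r₀, …, r_{k-2}`; nothing is asked of
the later terms of the sequence. -/
structure IsBraidFamily (k : ℕ) (r : ℕ → G) : Prop where
  braid : ∀ i, i + 2 < k → r i * r (i + 1) * r i = r (i + 1) * r i * r (i + 1)
  commute : ∀ i j, i + 2 ≤ j → j + 1 < k → Commute (r i) (r j)

/-- The Reflection Equation for `x`, written as invariance of `x₀ x₁` under `r₀`, together with the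
invariance of `x` under the other generators (`x` sits in the first tensor factor). -/
structure IsReflectionElement (k : ℕ) (r : ℕ → G) (x : B) : Prop where
  smul_eq : ∀ i, 1 ≤ i → i + 1 < k → r i • x = x
  reflection : 1 < k → r 0 • (x * r 0 • x) = x * r 0 • x

-- `s • y = s • r • y` exhibits the left factor as the image of `y` under the same `s * r` that
-- takes `s • y` to `r • s • y`; the braid relation moves `r` past `s * r`.
theorem smul_mul_smul_of_braid {r s : G} {y : B} (hbraid : r * s * r = s * r * s)
    (hr : r • y = y) (hs : s • (y * s • y) = y * s • y) :
    r • (s • y * r • s • y) = s • y * r • s • y := by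
  have hright : s • r • s • y = r • s • y := by
    calc s • r • s • y = (s * r * s) • y := by simp only [mul_smul]
      _ = r • s • r • y := by rw [← hbraid]; simp only [mul_smul]
      _ = r • s • y := by rw [hr]
  have himage : s • y * r • s • y = (s * r) • (y * s • y) := by
    rw [smul_mul', mul_smul, mul_smul, hr, hright]
  rw [himage, smul_smul, ← mul_assoc, hbraid, mul_smul, hs]

variable {k : ℕ} {r : ℕ → G} {x : B}

theorem smul_braidCopy_of_lt (hr : IsBraidFamily k r) (hx : IsReflectionElement k r x) {i j : ℕ}
    (hji : j < i) (hi : i + 1 < k) : r i • braidCopy r x j = braidCopy r x j := by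
  induction j with
  | zero => exact hx.smul_eq i hji hi
  | succ j ih =>
    rw [braidCopy, smul_smul, ← (hr.commute j i hji hi).eq, mul_smul, ih (by omega)]

theorem smul_braidCopy_of_succ_lt (hr : IsBraidFamily k r) (hx : IsReflectionElement k r x)
    {i j : ℕ} (hij : i + 2 ≤ j) (hj : j < k) : r i • braidCopy r x j = braidCopy r x j := by
  induction j, hij using Nat.le_induction with
  | base =>
    calc r i • r (i + 1) • r i • braidCopy r x i
        = (r i * r (i + 1) * r i) • braidCopy r x i := by simp only [mul_smul]
      _ = r (i + 1) • r i • r (i + 1) • braidCopy r x i := by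
          rw [hr.braid i hj]; simp only [mul_smul]
      _ = r (i + 1) • r i • braidCopy r x i := by
          rw [smul_braidCopy_of_lt hr hx i.lt_succ_self hj]
  | succ j hij ih =>
    rw [braidCopy, smul_smul, (hr.commute i j hij hj).eq, mul_smul, ih (by omega)]

theorem smul_braidCopy_mul_braidCopy_succ (hr : IsBraidFamily k r)
    (hx : IsReflectionElement k r x) {i : ℕ} (hi : i + 1 < k) :
    r i • (braidCopy r x i * braidCopy r x (i + 1)) =
      braidCopy r x i * braidCopy r x (i + 1) := by
  induction i with
  | zero => exact hx.reflection hi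
  | succ i ih =>
    exact smul_mul_smul_of_braid (hr.braid i hi).symm
      (smul_braidCopy_of_lt hr hx i.lt_succ_self hi) (ih (by omega))

theorem smul_prod_braidCopy_of_le (hr : IsBraidFamily k r) (hx : IsReflectionElement k r x)
    {i n : ℕ} (hni : n ≤ i) (hi : i + 1 < k) :
    r i • ((List.range n).map (braidCopy r x)).prod =
      ((List.range n).map (braidCopy r x)).prod := by
  induction n with
  | zero => exact smul_one _
  | succ n ih =>
    rw [List.prod_range_succ, smul_mul', ih (by omega), smul_braidCopy_of_lt hr hx hni hi]

theorem smul_prod_braidCopy (hr : IsBraidFamily k r) (hx : IsReflectionElement k r x)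
    {i n : ℕ} (hin : i + 2 ≤ n) (hn : n ≤ k) :
    r i • ((List.range n).map (braidCopy r x)).prod =
      ((List.range n).map (braidCopy r x)).prod := by
  induction n, hin using Nat.le_induction with
  | base =>
    rw [List.prod_range_succ, List.prod_range_succ, mul_assoc, smul_mul',
      smul_prod_braidCopy_of_le hr hx le_rfl hn, smul_braidCopy_mul_braidCopy_succ hr hx hn]
  | succ n hin ih =>
    rw [List.prod_range_succ, smul_mul', ih (by omega), smul_braidCopy_of_succ_lt hr hx hin hn]

end BraidAction

section ConjAction

variable {B : Type*} [Monoid B] (r : Bˣ) (x : B)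

theorem toConjAct_smul_eq_iff_commute : ConjAct.toConjAct r • x = x ↔ Commute (r : B) x := by
  rw [ConjAct.units_smul_def, ConjAct.ofConjAct_toConjAct, Units.mul_inv_eq_iff_eq_mul]
  rfl

theorem toConjAct_smul_mul_smul_eq_iff :
    ConjAct.toConjAct r • (x * ConjAct.toConjAct r • x) = x * ConjAct.toConjAct r • x ↔
      (r : B) * x * r * x = x * r * x * r := by
  rw [toConjAct_smul_eq_iff_commute, ConjAct.units_smul_def, ConjAct.ofConjAct_toConjAct,
    commute_iff_eq]
  simp only [← mul_assoc, Units.inv_mul_cancel_right, Units.mul_inv_eq_iff_eq_mul]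

end ConjAction

section Legs

variable {ι ι' κ n A : Type*}

open Classical in
/-- Splits a multi-index into its restriction to the legs `w` and the remaining indices. -/
def legsEquiv (w : ι ↪ κ) (n : Type*) : (κ → n) ≃ (ι → n) × (↥(Set.range w)ᶜ → n) :=
  (Equiv.piEquivPiSubtypeProd (· ∈ Set.range w) fun _ => n).trans
    (((Equiv.ofInjective w w.injective).symm.arrowCongr (Equiv.refl n)).prodCongr (Equiv.refl _))

open Classical in
/-- The operator `X` on `V^{⊗ι}` acting on `V^{⊗κ}` through the tensor factors ("legs") picked out
by `w`, and as the identity on the others. -/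
def legs [Zero A] (w : ι ↪ κ) (X : Matrix (ι → n) (ι → n) A) : Matrix (κ → n) (κ → n) A :=
  (blockDiagonal fun _ => X).submatrix (legsEquiv w n) (legsEquiv w n)

open Classical in
theorem legs_apply [Zero A] (w : ι ↪ κ) (X : Matrix (ι → n) (ι → n) A) (f g : κ → n) :
    legs w X f g = if Set.EqOn f g (Set.range w)ᶜ then X (f ∘ w) (g ∘ w) else 0 := by
  have hfst (h : κ → n) : (legsEquiv w n h).1 = h ∘ w := rfl
  have hsnd (h : κ → n) : (legsEquiv w n h).2 = (Set.range w)ᶜ.domRestrict h := rfl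
  rw [legs, submatrix_apply, blockDiagonal_apply, hfst, hfst, hsnd, hsnd]
  exact if_congr Set.domRestrict_eq_domRestrict_iff rfl rfl

theorem legs_one [Zero A] [One A] [DecidableEq (ι → n)] [DecidableEq (κ → n)] (w : ι ↪ κ) :
    legs w (1 : Matrix (ι → n) (ι → n) A) = 1 := by
  classical
  simpa only [legs, ← Pi.one_def, blockDiagonal_one] using submatrix_one_equiv (legsEquiv w n)

theorem legs_mul [Fintype ι] [DecidableEq ι] [Fintype κ] [DecidableEq κ] [Fintype n]
    [NonUnitalNonAssocSemiring A] (w : ι ↪ κ) (X Y : Matrix (ι → n) (ι → n) A) :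
    legs w (X * Y) = legs w X * legs w Y := by
  classical
  rw [legs, legs, legs, submatrix_mul_equiv]
  convert congrArg (submatrix · (legsEquiv w n) (legsEquiv w n))
    (blockDiagonal_mul (fun _ => X) fun _ => Y)

theorem legs_map [Zero A] {A' : Type*} [Zero A'] (w : ι ↪ κ) (X : Matrix (ι → n) (ι → n) A)
    (φ : A → A') (hφ : φ 0 = 0) : legs w (X.map φ) = (legs w X).map φ := by
  classical
  ext f g
  simp only [legs_apply, map_apply, apply_ite φ, hφ]

theorem legs_legs [Zero A] (w : ι ↪ ι') (w' : ι' ↪ κ) (X : Matrix (ι → n) (ι → n) A) :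
    legs w' (legs w X) = legs (w.trans w') X := by
  classical
  ext f g
  simp only [legs_apply, ← ite_and, Function.Embedding.coe_trans, Function.comp_assoc]
  refine if_congr ⟨fun ⟨houter, hinner⟩ j hj => ?_, fun h => ⟨fun j hj => h ?_, fun a ha => h ?_⟩⟩
    rfl rfl
  · by_cases hj' : j ∈ Set.range w'
    · obtain ⟨a, rfl⟩ := hj'
      exact hinner fun ⟨b, hb⟩ => hj ⟨b, congrArg w' hb⟩
    · exact houter hj'
  · exact fun ⟨b, hb⟩ => hj ⟨w b, hb⟩
  · exact fun ⟨b, hb⟩ => ha ⟨b, w'.injective hb⟩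

variable [Fintype κ] [DecidableEq κ] [Fintype n] [NonUnitalNonAssocSemiring A]
  {w : ι ↪ κ} {w' : ι' ↪ κ}

open Classical in
theorem legs_mul_legs_apply (hw : Disjoint (Set.range w) (Set.range w'))
    (X : Matrix (ι → n) (ι → n) A) (Y : Matrix (ι' → n) (ι' → n) A) (f g : κ → n) :
    (legs w X * legs w' Y) f g =
      if Set.EqOn f g (Set.range w ∪ Set.range w')ᶜ then
        X (f ∘ w) (g ∘ w) * Y (f ∘ w') (g ∘ w') else 0 := by
  -- The only intermediate multi-index that contributes.
  set h₀ : κ → n := (Set.range w).piecewise g f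
  have hg : Set.EqOn h₀ g (Set.range w) := Set.piecewise_eqOn _ _ _
  have hf : Set.EqOn h₀ f (Set.range w)ᶜ := Set.piecewise_eqOn_compl _ _ _
  rw [mul_apply, Finset.sum_eq_single h₀]
  · have hcomp : h₀ ∘ w = g ∘ w := funext fun a => hg ⟨a, rfl⟩
    have hcomp' : h₀ ∘ w' = f ∘ w' :=
      funext fun b => hf (hw.notMem_of_mem_right ⟨b, rfl⟩)
    rw [legs_apply, legs_apply, if_pos hf.symm, hcomp, hcomp', mul_ite, mul_zero]
    refine if_congr ⟨fun h j hj => ?_, fun h j hj' => ?_⟩ rfl rfl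
    · rw [Set.compl_union] at hj
      rw [← h hj.2, hf hj.1]
    · by_cases hj : j ∈ Set.range w
      · exact hg hj
      · rw [hf hj, h (not_or.2 ⟨hj, hj'⟩)]
  · intro h _ hne
    rw [legs_apply, legs_apply, ite_zero_mul_ite_zero, if_neg]
    rintro ⟨hfh, hhg⟩
    refine hne (funext fun j => ?_)
    by_cases hj : j ∈ Set.range w
    · rw [hg hj, hhg (hw.notMem_of_mem_left hj)]
    · rw [hf hj, hfh hj]
  · exact fun h => absurd (Finset.mem_univ _) h

theorem commute_legs (hw : Disjoint (Set.range w) (Set.range w')) {X : Matrix (ι → n) (ι → n) A}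
    {Y : Matrix (ι' → n) (ι' → n) A} (hXY : ∀ a b c d, Commute (X a b) (Y c d)) :
    Commute (legs w X) (legs w' Y) := by
  ext f g
  rw [legs_mul_legs_apply hw, legs_mul_legs_apply hw.symm, (hXY _ _ _ _).eq, Set.union_comm]

end Legs

section Window

variable {p i k : ℕ}

/-- The `p` consecutive tensor factors `i, …, i + p - 1` among `k`. -/
def window (h : i + p ≤ k) : Fin p ↪ Fin k :=
  (Fin.natAddEmb i).trans (Fin.castLEEmb h)

theorem val_window (h : i + p ≤ k) (a : Fin p) : (window h a : ℕ) = i + a := rfl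

theorem mem_range_window (h : i + p ≤ k) (j : Fin k) :
    j ∈ Set.range (window h) ↔ i ≤ j ∧ (j : ℕ) < i + p := by
  constructor
  · rintro ⟨a, rfl⟩
    rw [val_window]
    omega
  · rintro ⟨hij, hj⟩
    exact ⟨⟨j - i, by omega⟩, Fin.ext (by rw [val_window]; dsimp only; omega)⟩

theorem disjoint_range_window {p' i' : ℕ} (h : i + p ≤ k) (h' : i' + p' ≤ k) (hi : i + p ≤ i') :
    Disjoint (Set.range (window h)) (Set.range (window h')) := by
  refine Set.disjoint_left.2 fun j hj hj' => ?_
  rw [mem_range_window] at hj hj'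
  omega

theorem window_trans {s a : ℕ} (h' : a + s ≤ p) (h : i + p ≤ k) :
    (window h').trans (window h) = window (show i + a + s ≤ k by omega) := by
  ext b
  simp only [Function.Embedding.trans_apply, val_window, add_assoc]

variable {N : ℕ} {A : Type*} [Ring A]

theorem embR_eq_legs (R : RMat N) (h : i + 2 ≤ k) :
    embR k R i = legs (window h) (R.submatrix (finTwoArrowEquiv _) (finTwoArrowEquiv _)) := by
  classical
  ext f g
  rw [embR, dif_pos (show i + 1 < k from h), legs_apply]
  refine if_congr (forall_congr' fun j => ?_) rfl rfl
  rw [Set.mem_compl_iff, mem_range_window, ← and_imp]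
  exact imp_congr_left (by omega)

theorem emb1_eq_legs (X : Matrix (Fin N) (Fin N) A) (h : 0 + 1 ≤ k) :
    emb1 k X = legs (window h) (X.submatrix (Equiv.funUnique _ _) (Equiv.funUnique _ _)) := by
  classical
  ext f g
  rw [emb1, dif_pos (show 0 < k by omega), legs_apply]
  refine if_congr (forall_congr' fun j => ?_) rfl rfl
  rw [Set.mem_compl_iff, mem_range_window]
  exact imp_congr_left (by omega)

theorem legs_embR (R : RMat N) {a : ℕ} (h : i + p ≤ k) (ha : a + 2 ≤ p) :
    legs (window h) (embR p R a) = embR k R (i + a) := by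
  rw [embR_eq_legs R ha, legs_legs, window_trans, embR_eq_legs]

theorem legs_emb1 (X : Matrix (Fin N) (Fin N) A) (h : 0 + p ≤ k) (hp : 0 + 1 ≤ p) :
    legs (window h) (emb1 p X) = emb1 k X := by
  rw [emb1_eq_legs X hp, legs_legs, window_trans, emb1_eq_legs]

theorem embR_of_le (R : RMat N) (h : k ≤ i + 1) : embR k R i = 1 := by
  ext f g
  rw [embR, dif_neg h.not_gt]

/-- `embR` as a homomorphism in the matrix `R`. -/
def embRHom (k i : ℕ) : RMat N →* TMat N k ℂ where
  toFun R := embR k R i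
  map_one' := by
    rcases lt_or_ge (i + 1) k with h | h
    · rw [embR_eq_legs 1 h, submatrix_one_equiv, legs_one]
    · exact embR_of_le 1 h
  map_mul' R S := by
    rcases lt_or_ge (i + 1) k with h | h
    · simp only [embR_eq_legs _ h, ← legs_mul, submatrix_mul_equiv]
    · simp only [embR_of_le _ h, one_mul]

end Window

section Hecke

variable {N k : ℕ} {A : Type*} [Ring A] [Algebra ℂ A]

variable (N k A) in
/-- `liftC` as an algebra homomorphism. -/
def liftCHom : TMat N k ℂ →ₐ[ℂ] TMat N k A := (Algebra.ofId ℂ A).mapMatrix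

theorem liftCHom_apply (X : TMat N k ℂ) : liftCHom N k A X = liftC A X := rfl

theorem legs_liftC {p : ℕ} (w : Fin p ↪ Fin k) (X : TMat N p ℂ) :
    legs w (liftC A X) = liftC A (legs w X) :=
  legs_map w X _ (map_zero _)

variable (k A) in
/-- The copy of an invertible `R` acting in the factors `i` and `i + 1`, as a unit over `A`. -/
def unitR (R : (RMat N)ˣ) (i : ℕ) : (TMat N k A)ˣ :=
  Units.map ((liftCHom N k A : TMat N k ℂ →* TMat N k A).comp (embRHom k i)) R

variable (k A) in
/-- The `i`-th braid generator attached to `R`: conjugation by `unitR k A R i`. -/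
def conjR (R : (RMat N)ˣ) (i : ℕ) : ConjAct (TMat N k A)ˣ :=
  ConjAct.toConjAct (unitR k A R i)

theorem coe_unitR (R : (RMat N)ˣ) (i : ℕ) : (unitR k A R i : TMat N k A) = liftC A (embR k R i) :=
  rfl

theorem coe_inv_unitR (R : (RMat N)ˣ) (i : ℕ) :
    (((unitR k A R i)⁻¹ : (TMat N k A)ˣ) : TMat N k A) =
      liftC A (embR k ((R⁻¹ : (RMat N)ˣ) : RMat N) i) :=
  rfl

theorem copyX_eq_braidCopy (R : (RMat N)ˣ) (X : Matrix (Fin N) (Fin N) A) :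
    copyX k (R : RMat N) (R⁻¹ : (RMat N)ˣ) X = braidCopy (conjR k A R) (emb1 k X) := by
  funext i
  induction i with
  | zero => rfl
  | succ i ih =>
    rw [copyX, ih, braidCopy, conjR, ConjAct.units_smul_def, ConjAct.ofConjAct_toConjAct,
      coe_unitR, coe_inv_unitR]

theorem embR_braid {R : RMat N} (hR : IsBraiding R) {i : ℕ} (hi : i + 2 < k) :
    embR k R i * embR k R (i + 1) * embR k R i =
      embR k R (i + 1) * embR k R i * embR k R (i + 1) := by
  have h := congrArg (legs (window (show i + 3 ≤ k from hi))) hR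
  simpa only [legs_mul, legs_embR R _ (show 0 + 2 ≤ 3 by norm_num),
    legs_embR R _ (show 1 + 2 ≤ 3 by norm_num), add_zero] using h

theorem commute_embR_embR (R : RMat N) {i j : ℕ} (hij : i + 2 ≤ j) (hj : j + 1 < k) :
    Commute (embR k R i) (embR k R j) := by
  rw [embR_eq_legs R (show i + 2 ≤ k by omega), embR_eq_legs R (show j + 2 ≤ k from hj)]
  exact commute_legs (disjoint_range_window _ _ hij) fun _ _ _ _ => Commute.all _ _

theorem commute_liftC_embR_emb1 (R : RMat N) (X : Matrix (Fin N) (Fin N) A) {i : ℕ}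
    (hi : 1 ≤ i) (hik : i + 1 < k) : Commute (liftC A (embR k R i)) (emb1 k X) := by
  rw [embR_eq_legs R (show i + 2 ≤ k from hik), ← legs_liftC,
    emb1_eq_legs X (show 0 + 1 ≤ k by omega)]
  exact (commute_legs (disjoint_range_window _ _ hi)
    fun _ _ _ _ => Algebra.commute_algebraMap_right _ _).symm

theorem reflection_emb1 {R : RMat N} {M : Matrix (Fin N) (Fin N) A} (hM : RERel R M)
    (hk : 1 < k) :
    liftC A (embR k R 0) * emb1 k M * liftC A (embR k R 0) * emb1 k M =
      emb1 k M * liftC A (embR k R 0) * emb1 k M * liftC A (embR k R 0) := by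
  have h := congrArg (legs (window (show 0 + 2 ≤ k by omega))) hM
  simpa only [legs_mul, legs_liftC, legs_embR R _ (show 0 + 2 ≤ 2 by norm_num),
    legs_emb1 M _ (show 0 + 1 ≤ 2 by norm_num)] using h

theorem isBraidFamily_conjR {R : (RMat N)ˣ} (hR : IsBraiding (R : RMat N)) :
    IsBraidFamily k (conjR k A R) where
  braid i hi := by
    have hunit : unitR k A R i * unitR k A R (i + 1) * unitR k A R i =
        unitR k A R (i + 1) * unitR k A R i * unitR k A R (i + 1) := by
      ext1
      simpa only [map_mul, Units.val_mul, coe_unitR, liftCHom_apply] using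
        congrArg (liftCHom N k A) (embR_braid hR hi)
    simpa only [conjR, map_mul] using congrArg ConjAct.toConjAct hunit
  commute i j hij hj := by
    have hunit : Commute (unitR k A R i) (unitR k A R j) :=
      Commute.units_of_val ((commute_embR_embR (R : RMat N) hij hj).map (liftCHom N k A))
    exact hunit.map ConjAct.toConjAct

theorem isReflectionElement_emb1 {R : (RMat N)ˣ} {M : Matrix (Fin N) (Fin N) A}
    (hM : RERel (R : RMat N) M) : IsReflectionElement k (conjR k A R) (emb1 k M) where
  smul_eq i hi hik := by
    rw [conjR, toConjAct_smul_eq_iff_commute, coe_unitR]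
    exact commute_liftC_embR_emb1 _ M hi hik
  reflection hk := by
    rw [conjR, toConjAct_smul_mul_smul_eq_iff, coe_unitR]
    exact reflection_emb1 hM hk

theorem commute_liftC_embR_upChain {R : (RMat N)ˣ} (hR : IsBraiding (R : RMat N))
    {M : Matrix (Fin N) (Fin N) A} (hM : RERel (R : RMat N) M) (i : ℕ) :
    Commute (liftC A (embR k R i)) (upChain k (R : RMat N) (R⁻¹ : (RMat N)ˣ) M k) := by
  rcases lt_or_ge (i + 1) k with hi | hi
  · rw [upChain, copyX_eq_braidCopy]
    have hfix := smul_prod_braidCopy (isBraidFamily_conjR (k := k) (A := A) hR)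
      (isReflectionElement_emb1 hM) hi le_rfl
    rwa [conjR, toConjAct_smul_eq_iff_commute, coe_unitR] at hfix
  · rw [embR_of_le _ hi, ← liftCHom_apply, map_one]
    exact Commute.one_left _

theorem asym_mem (R : RMat N) (q : ℂ) {S : Subalgebra ℂ (TMat N k ℂ)}
    (hS : ∀ i, embR k R i ∈ S) : ∀ j, Asym k R q j ∈ S
  | 0 => S.one_mem
  | 1 => S.one_mem
  | j + 2 =>
    have ih := asym_mem R q hS (j + 1)
    S.smul_mem (S.mul_mem (S.mul_mem ih
      (S.sub_mem (S.smul_mem S.one_mem _) (S.smul_mem (hS j) _))) ih) _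

theorem commute_liftC_asym {R : RMat N} {Z : TMat N k A}
    (hZ : ∀ i, Commute (liftC A (embR k R i)) Z) (q : ℂ) (j : ℕ) :
    Commute (liftC A (Asym k R q j)) Z := by
  have hmem (X : TMat N k ℂ) :
      X ∈ (Subalgebra.centralizer ℂ {Z}).comap (liftCHom N k A) ↔ Commute (liftC A X) Z := by
    simp only [Subalgebra.mem_comap, Subalgebra.mem_centralizer_iff, Set.mem_singleton_iff,
      forall_eq, liftCHom_apply]
    exact eq_comm
  exact (hmem _).1 (asym_mem R q (fun i => (hmem _).2 (hZ i)) j)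

end Hecke

section RankOne

variable {n K A : Type*} [Fintype n] [CommSemiring K] [Semiring A] [Algebra K A] {u v : n → K}

theorem map_vecMulVec_mul_mul (u v : n → K) (Z : Matrix n n A) :
    (vecMulVec u v).map (algebraMap K A) * Z * (vecMulVec u v).map (algebraMap K A) =
      (vecMulVec u v).map (· • ∑ f, ∑ g, (v f * u g) • Z f g) := by
  ext a b
  simp only [mul_apply, map_apply, vecMulVec_apply, ← Algebra.smul_def, ← Algebra.commutes,
    Finset.smul_sum, smul_smul]
  rw [Finset.sum_comm]
  refine Finset.sum_congr rfl fun f _ => Finset.sum_congr rfl fun g _ => ?_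
  congr 1
  ring

theorem map_vecMulVec_mul_of_commute (huv : v ⬝ᵥ u = 1) {Z : Matrix n n A}
    (hZ : Commute ((vecMulVec u v).map (algebraMap K A)) Z) :
    (vecMulVec u v).map (algebraMap K A) * Z =
      (vecMulVec u v).map (· • ∑ f, ∑ g, (v f * u g) • Z f g) := by
  have hidem : vecMulVec u v * vecMulVec u v = vecMulVec u v := by
    rw [vecMulVec_mul_vecMulVec, huv, one_smul]
  rw [← map_vecMulVec_mul_mul, mul_assoc, ← hZ.eq, ← mul_assoc, ← Matrix.map_mul, hidem]

theorem trace_map_smul_right (X : Matrix n n K) (d : A) : trace (X.map (· • d)) = trace X • d := by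
  simp only [trace, diag_apply, map_apply, Finset.sum_smul]

theorem rTr_map_smul_right {N k : ℕ} {A : Type*} [Ring A] [Algebra ℂ A]
    (C : Matrix (Fin N) (Fin N) ℂ) (X : TMat N k ℂ) (d : A) :
    rTr C (X.map (· • d)) = rTr C X • d := by
  simp only [rTr, map_apply, Finset.sum_smul, smul_smul, smul_eq_mul]

end RankOne

theorem statement16_general {N m : ℕ} (R : (RMat N)ˣ) (C : Matrix (Fin N) (Fin N) ℂ) (q : ℂ)
    (hbr : IsBraiding (R : RMat N)) {A : Type*} [Ring A] [Algebra ℂ A]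
    (M : Matrix (Fin N) (Fin N) A) (hRE : RERel (R : RMat N) M)
    (u v : (Fin m → Fin N) → ℂ) (hA : Asym m (R : RMat N) q m = vecMulVec u v)
    (hnorm : v ⬝ᵥ u = 1) :
    rTr C (liftC A (Asym m (R : RMat N) q m) * upChain m (R : RMat N) (R⁻¹ : (RMat N)ˣ) M m) =
        rTr C (Asym m (R : RMat N) q m) • ∑ f : Fin m → Fin N, ∑ g : Fin m → Fin N,
          (v f * u g) • upChain m (R : RMat N) (R⁻¹ : (RMat N)ˣ) M m f g ∧
      trace (liftC A (Asym m (R : RMat N) q m) *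
          upChain m (R : RMat N) (R⁻¹ : (RMat N)ˣ) M m) =
        ∑ f : Fin m → Fin N, ∑ g : Fin m → Fin N,
          (v f * u g) • upChain m (R : RMat N) (R⁻¹ : (RMat N)ˣ) M m f g := by
  have hcomm := commute_liftC_asym (commute_liftC_embR_upChain (k := m) hbr hRE) q m
  rw [hA] at hcomm ⊢
  have hAZ := map_vecMulVec_mul_of_commute hnorm hcomm
  rw [liftC, hAZ, rTr_map_smul_right, trace_map_smul_right, trace_vecMulVec, dotProduct_comm,
    hnorm, one_smul]
  exact ⟨rfl, rfl⟩

/-- under `A^(m) = |u⟩⟨v|`, `⟨v|u⟩ = 1` and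
`Tr(C^{⊗m} A^(m)) = q^{−m²}`, the quantum determinant
`det_R M = q^{m²}·Tr(C^{⊗m} A^(m) M_{1̄}⋯M_{m̄})` is given by the usual trace:
`det_R M = ⟨v|M_{1̄}⋯M_{m̄}|u⟩ = Tr(A^(m) M_{1̄}⋯M_{m̄})`. -/
theorem statement16 {N m : ℕ} (R Rinv Ψ : RMat N) (q : ℂ)
    (hq0 : q ≠ 0) (hq1 : q ≠ 1) (hqm1 : q ≠ -1)
    (hinv : R * Rinv = 1) (hinv' : Rinv * R = 1)
    (hbr : IsBraiding R) (hH : HeckeCond R q) (hΨ : SkewInv R Ψ)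
    (hqm : ∀ j : ℕ, 2 ≤ j → j ≤ m → qNum q j ≠ 0)
    {A : Type _} [Ring A] [Algebra ℂ A]
    (M : Matrix (Fin N) (Fin N) A) (hRE : RERel R M)
    (u v : (Fin m → Fin N) → ℂ)
    (hA : ∀ f g : Fin m → Fin N, Asym m R q m f g = u f * v g)
    (hnorm : (∑ f : Fin m → Fin N, v f * u f) = 1)
    (htr : rTr (Cmat Ψ) (Asym m R q m) = q⁻¹ ^ (m ^ 2)) :
    (q ^ (m ^ 2)) • rTr (Cmat Ψ) (liftC A (Asym m R q m) * upChain m R Rinv M m)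
        = ∑ f : Fin m → Fin N, ∑ g : Fin m → Fin N,
            (v f * u g) • upChain m R Rinv M m f g ∧
    (q ^ (m ^ 2)) • rTr (Cmat Ψ) (liftC A (Asym m R q m) * upChain m R Rinv M m)
        = Matrix.trace (liftC A (Asym m R q m) * upChain m R Rinv M m) := by
  obtain ⟨hdet, htrace⟩ := statement16_general ⟨R, Rinv, hinv, hinv'⟩ (Cmat Ψ) q hbr M hRE u v
    (Matrix.ext hA) hnorm
  simp only [Units.inv_mk] at hdet htrace
  rw [hdet, htrace, htr, smul_smul, ← mul_pow, mul_inv_cancel₀ hq0, one_pow, one_smul]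
  exact ⟨rfl, rfl⟩
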